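/- Let m_i, m_e, ν_i, ν_e, e, c > 0, set μ₂ = c²m_iν_im_eν_e/(4πe²(m_iν_i+m_eν_e)), and assume the cubic g(λ) = λ³ + (ν_i+ν_e)λ² + (ν_iν_e + 4π(e²/m_i+e²/m_e))λ + 4π(e²ν_e/m_i+e²ν_i/m_e) has three distinct complex roots. Then there exist constants r₀, C, λ > 0 such that for every k ∈ ℝ³ with 0 < |k| ≤ r₀ and every solution (û_i, û_e, Ê, B̂) of the Fourier-transformed transverse electromagnetic system at frequency k, one has for all t ≥ 0: |B̂(t) − e^{−μ₂|k|²t} B̂(0)| ≤ C(|k| e^{−λ|k|²t} + e^{−λt}) |Û_{0,⊥}|, where |Û_{0,⊥}|² = |û_i(0)|² + |û_e(0)|² + |Ê(0)|² + |B̂(0)|². -/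

import Mathlib

open Real Complex

/-- Squared Hermitian norm on `ℂ³`. -/
noncomputable def hsq (v : Fin 3 → ℂ) : ℝ := ∑ j, Complex.normSq (v j)

/-- Hermitian norm on `ℂ³`. -/
noncomputable def hnorm (v : Fin 3 → ℂ) : ℝ := Real.sqrt (hsq v)

/-- Cross product on `ℂ³`. -/
def cross3 (u v : Fin 3 → ℂ) : Fin 3 → ℂ :=
  ![u 1 * v 2 - u 2 * v 1, u 2 * v 0 - u 0 * v 2, u 0 * v 1 - u 1 * v 0]

/-- The vector `i k` with components `i k_j`. -/
def ikv (k : Fin 3 → ℝ) : Fin 3 → ℂ := fun j => Complex.I * (k j : ℂ)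

/-! The unit curl `J = |k|⁻¹ (i k) ×` is an isometric involution of the transverse fields. Applied
to `û_i`, `û_e`, `Ê`, it turns the system into one whose only parameter is `ω = c |k|` and in which
`∂ₜ B = -ω f` with `f = J Ê`. Eliminating `f` through Ohm's law, that is, through the time
derivative of a combination `X` of the rotated fields, gives `∂ₜ (B + ω X) = -η ω² B` with
`μ₂ = c² η`. So `W = B + ω X` satisfies `∂ₜ W = -η ω² W + η ω³ X`, a diffusion equation with a small
forcing. A hypocoercive Lyapunov functional bounds the whole state, hence `X`, by a multiple of
`e^{-θ ω² t}` as long as `ω` stays bounded, and Duhamel's formula then turns the forcing into an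
error of size `ω³ / ω² = ω`.
-/

open Filter Set Topology
open scoped RealInnerProductSpace Matrix

section Exponential

theorem hasDerivAt_exp_mul (κ t : ℝ) :
    HasDerivAt (fun t => Real.exp (κ * t)) (κ * Real.exp (κ * t)) t := by
  simpa [mul_comm] using ((hasDerivAt_id t).const_mul κ).exp

theorem le_exp_mul_of_hasDerivWithinAt_le {κ : ℝ} {f f' : ℝ → ℝ}
    (hf : ∀ t ∈ Ici 0, HasDerivWithinAt f (f' t) (Ici 0) t)
    (hle : ∀ t ∈ Ici 0, f' t ≤ -κ * f t) :
    ∀ t ∈ Ici 0, f t ≤ Real.exp (-κ * t) * f 0 := by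
  intro t ht
  have hcont : ContinuousOn f (Icc 0 t) := fun x hx =>
    (hf x hx.1).continuousWithinAt.mono Icc_subset_Ici_self
  have hslope : ∀ x ∈ Ico 0 t, ∀ q, f' x < q → ∃ᶠ z in 𝓝[>] x, (z - x)⁻¹ * (f z - f x) < q :=
    fun x hx _ hq => ((hf x hx.1).mono (Ici_subset_Ici.2 hx.1)).liminf_right_slope_le hq
  have hbound := le_gronwallBound_of_liminf_deriv_right_le (K := -κ) (ε := 0) hcont hslope
    le_rfl (fun x hx => by simpa only [add_zero] using hle x hx.1) t ⟨ht, le_rfl⟩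
  rwa [gronwallBound_ε0, sub_zero, mul_comm] at hbound

theorem norm_sub_exp_smul_le_of_norm_forcing_le {F : Type*} [NormedAddCommGroup F]
    [NormedSpace ℝ F] {κ lam M : ℝ} {w g : ℝ → F} (hlam : lam < κ)
    (hw : ∀ t ∈ Ici 0, HasDerivWithinAt w (-κ • w t + g t) (Ici 0) t)
    (hg : ∀ t ∈ Ici 0, ‖g t‖ ≤ M * Real.exp (-lam * t)) :
    ∀ t ∈ Ici 0, ‖w t - Real.exp (-κ * t) • w 0‖ ≤ M / (κ - lam) * Real.exp (-lam * t) := by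
  intro t ht
  have hgap : 0 < κ - lam := sub_pos.2 hlam
  have hM : 0 ≤ M := by simpa using (norm_nonneg _).trans (hg 0 self_mem_Ici)
  set v : ℝ → F := fun t => Real.exp (κ * t) • w t - w 0
  have hv : ∀ x ∈ Ici 0, HasDerivWithinAt v (Real.exp (κ * x) • g x) (Ici 0) x := fun x hx =>
    (((hasDerivAt_exp_mul κ x).hasDerivWithinAt.smul (hw x hx)).sub_const (w 0)).congr_deriv
      (by module)
  have hbound : ‖v t‖ ≤ M / (κ - lam) * Real.exp ((κ - lam) * t) := by
    refine image_norm_le_of_norm_deriv_right_le_deriv_boundary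
      (fun x hx => (hv x hx.1).continuousWithinAt.mono Icc_subset_Ici_self)
      (fun x hx => (hv x hx.1).mono (Ici_subset_Ici.2 hx.1)) ?_
      (fun x => (hasDerivAt_exp_mul (κ - lam) x).const_mul (M / (κ - lam)))
      (fun x hx => ?_) (right_mem_Icc.2 ht)
    · simp only [v, mul_zero, Real.exp_zero, one_smul, sub_self, norm_zero]
      positivity
    · calc ‖Real.exp (κ * x) • g x‖ = Real.exp (κ * x) * ‖g x‖ := by
            rw [norm_smul, Real.norm_of_nonneg (Real.exp_pos _).le]
        _ ≤ Real.exp (κ * x) * (M * Real.exp (-lam * x)) := by gcongr; exact hg x hx.1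
        _ = M * Real.exp ((κ - lam) * x) := by
            rw [mul_left_comm, ← Real.exp_add]; ring_nf
        _ = M / (κ - lam) * ((κ - lam) * Real.exp ((κ - lam) * x)) := by field_simp
  calc ‖w t - Real.exp (-κ * t) • w 0‖ = ‖Real.exp (-κ * t) • v t‖ := by
        simp only [v]
        rw [smul_sub, smul_smul, ← Real.exp_add, neg_mul, neg_add_cancel, Real.exp_zero, one_smul]
    _ = Real.exp (-κ * t) * ‖v t‖ := by rw [norm_smul, Real.norm_of_nonneg (Real.exp_pos _).le]
    _ ≤ Real.exp (-κ * t) * (M / (κ - lam) * Real.exp ((κ - lam) * t)) := by gcongr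
    _ = M / (κ - lam) * Real.exp (-lam * t) := by
        rw [mul_left_comm, ← Real.exp_add]; ring_nf

end Exponential

/-- The amplitudes of one transverse Fourier mode of the linearised two-fluid Maxwell system,
with values in a real Hilbert space. After `û_i`, `û_e`, `Ê` have been rotated by the unit curl
they become `a`, `b`, `f`, and the only trace of the wave vector is the light frequency
`ω = c |k|`. -/
structure IsTwoFluidMode {H : Type*} [NormedAddCommGroup H] [InnerProductSpace ℝ H]
    (mi me νi νe e ω : ℝ) (a b f B : ℝ → H) : Prop where
  ion : ∀ t ∈ Ici 0, HasDerivWithinAt a ((e / mi) • f t - νi • a t) (Ici 0) t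
  electron : ∀ t ∈ Ici 0, HasDerivWithinAt b (-(e / me) • f t - νe • b t) (Ici 0) t
  electric : ∀ t ∈ Ici 0,
    HasDerivWithinAt f (ω • B t - (4 * π * e) • (a t - b t)) (Ici 0) t
  magnetic : ∀ t ∈ Ici 0, HasDerivWithinAt B (-ω • f t) (Ici 0) t

section ModeSq

variable {H : Type*} [NormedAddCommGroup H]

/-- The squared Hilbert norm of the state `(a, b, f, B)` in `H⁴`. -/
def modeSq (a b f B : H) : ℝ := ‖a‖ ^ 2 + ‖b‖ ^ 2 + ‖f‖ ^ 2 + ‖B‖ ^ 2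

theorem modeSq_nonneg (a b f B : H) : 0 ≤ modeSq a b f B := by unfold modeSq; positivity

theorem mul_modeSq_le {D p₁ p₂ p₃ p₄ : ℝ} (h₁ : D ≤ p₁) (h₂ : D ≤ p₂) (h₃ : D ≤ p₃)
    (h₄ : D ≤ p₄) (a b f B : H) :
    D * modeSq a b f B ≤ p₁ * ‖a‖ ^ 2 + p₂ * ‖b‖ ^ 2 + p₃ * ‖f‖ ^ 2 + p₄ * ‖B‖ ^ 2 := by
  rw [modeSq, mul_add, mul_add, mul_add]
  gcongr

theorem le_mul_modeSq {M p₁ p₂ p₃ p₄ : ℝ} (h₁ : p₁ ≤ M) (h₂ : p₂ ≤ M) (h₃ : p₃ ≤ M)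
    (h₄ : p₄ ≤ M) (a b f B : H) :
    p₁ * ‖a‖ ^ 2 + p₂ * ‖b‖ ^ 2 + p₃ * ‖f‖ ^ 2 + p₄ * ‖B‖ ^ 2 ≤ M * modeSq a b f B := by
  rw [modeSq, mul_add, mul_add, mul_add]
  gcongr

theorem norm_le_sqrt_modeSq (a b f B : H) :
    ‖a‖ ≤ √(modeSq a b f B) ∧ ‖b‖ ≤ √(modeSq a b f B) ∧ ‖f‖ ≤ √(modeSq a b f B) := by
  have ha := sq_nonneg ‖a‖
  have hb := sq_nonneg ‖b‖
  have hf := sq_nonneg ‖f‖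
  have hB := sq_nonneg ‖B‖
  refine ⟨?_, ?_, ?_⟩ <;> exact Real.le_sqrt_of_sq_le (by rw [modeSq]; linarith)

end ModeSq

section Mode

variable {H : Type*} [NormedAddCommGroup H] [InnerProductSpace ℝ H]
variable {mi me νi νe e ω Ω s : ℝ}

theorem abs_real_inner_le_half_add_sq (x y : H) : |⟪x, y⟫| ≤ (‖x‖ ^ 2 + ‖y‖ ^ 2) / 2 := by
  linarith [abs_real_inner_le_norm x y, two_mul_le_add_sq ‖x‖ ‖y‖]

/-- The physical energy, perturbed by cross terms that make the damping of `a` and `b` visible to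
`f` and, through `f`, to `B`. The small parameter `s` enters in the powers `s ^ 4 ≫ s ^ 6` because
then, in the variables `s ^ 2 • f` and `(s ^ 3 * ω) • B`, the dissipation is diagonal up to
`O(s)`. -/
noncomputable def lyapunov (mi me ω s : ℝ) (a b f B : H) : ℝ :=
  mi * ‖a‖ ^ 2 + me * ‖b‖ ^ 2 + (4 * π)⁻¹ * ‖f‖ ^ 2 + (4 * π)⁻¹ * ‖B‖ ^ 2
    - s ^ 4 * (2 * ⟪a, f⟫) - s ^ 6 * ω * (2 * ⟪f, B⟫)

/-- Minus half the time derivative of `lyapunov` along a mode. -/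
noncomputable def dissipation (mi me νi νe e ω s : ℝ) (a b f B : H) : ℝ :=
  mi * νi * ‖a‖ ^ 2 + me * νe * ‖b‖ ^ 2
    + s ^ 4 * (e / mi * ‖f‖ ^ 2 - νi * ⟪a, f⟫ + ω * ⟪a, B⟫ - 4 * π * e * ⟪a, a - b⟫)
    + s ^ 6 * ω * (ω * ‖B‖ ^ 2 - 4 * π * e * ⟪a - b, B⟫ - ω * ‖f‖ ^ 2)

/-- The part of the dissipation that is of relative order `s`, in the rescaled fields
`F = s ^ 2 • f` and `Y = (s ^ 3 * ω) • B`. -/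
noncomputable def dissipationError (νi e ω s : ℝ) (a b F Y : H) : ℝ :=
  s * νi * ⟪a, F⟫ - ⟪a, Y⟫ + s ^ 3 * (4 * π * e) * ⟪a, a - b⟫
    + s ^ 2 * (4 * π * e) * ⟪a - b, Y⟫ + s * ω ^ 2 * ‖F‖ ^ 2

theorem IsTwoFluidMode.hasDerivWithinAt_lyapunov {a b f B : ℝ → H} (hmi : mi ≠ 0) (hme : me ≠ 0)
    (h : IsTwoFluidMode mi me νi νe e ω a b f B) {t : ℝ} (ht : t ∈ Ici 0) :
    HasDerivWithinAt (fun t => lyapunov mi me ω s (a t) (b t) (f t) (B t))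
      (-2 * dissipation mi me νi νe e ω s (a t) (b t) (f t) (B t)) (Ici 0) t := by
  have ha := h.ion t ht
  have hb := h.electron t ht
  have hf := h.electric t ht
  have hB := h.magnetic t ht
  refine ((((((ha.norm_sq.const_mul mi).add (hb.norm_sq.const_mul me)).add
    (hf.norm_sq.const_mul (4 * π)⁻¹)).add (hB.norm_sq.const_mul (4 * π)⁻¹)).sub
    (((ha.inner ℝ hf).const_mul 2).const_mul (s ^ 4))).sub
    (((hf.inner ℝ hB).const_mul 2).const_mul (s ^ 6 * ω))).congr_deriv ?_
  simp only [dissipation, inner_sub_left, inner_sub_right, real_inner_smul_left,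
    real_inner_smul_right, real_inner_self_eq_norm_sq]
  rw [real_inner_comm (a t) (f t), real_inner_comm (b t) (f t), real_inner_comm (f t) (B t)]
  field_simp
  ring

theorem abs_lyapunov_sub_energy_le (hs : 0 ≤ s) (hs₁ : s ≤ 1) (hω : 0 ≤ ω) (hsω : s * ω ≤ 1)
    (a b f B : H) :
    |lyapunov mi me ω s a b f B - (mi * ‖a‖ ^ 2 + me * ‖b‖ ^ 2 + (4 * π)⁻¹ * ‖f‖ ^ 2
      + (4 * π)⁻¹ * ‖B‖ ^ 2)| ≤ 2 * s * modeSq a b f B := by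
  have hs4 : s ^ 4 ≤ s := pow_le_of_le_one hs hs₁ (by norm_num)
  have hs6 : s ^ 6 * ω ≤ s := by
    calc s ^ 6 * ω = s ^ 5 * (s * ω) := by ring
      _ ≤ s * 1 := by gcongr; exact pow_le_of_le_one hs hs₁ (by norm_num)
      _ = s := mul_one s
  calc _ = |s ^ 4 * (2 * ⟪a, f⟫) + s ^ 6 * ω * (2 * ⟪f, B⟫)| := by
        rw [lyapunov, ← abs_neg]; congr 1; ring
    _ ≤ |s ^ 4 * (2 * ⟪a, f⟫)| + |s ^ 6 * ω * (2 * ⟪f, B⟫)| := abs_add_le _ _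
    _ = s ^ 4 * (2 * |⟪a, f⟫|) + s ^ 6 * ω * (2 * |⟪f, B⟫|) := by
        simp only [abs_mul, abs_of_nonneg hω, abs_of_nonneg hs, abs_pow, abs_two]
    _ ≤ s * (2 * ((‖a‖ ^ 2 + ‖f‖ ^ 2) / 2)) + s * (2 * ((‖f‖ ^ 2 + ‖B‖ ^ 2) / 2)) := by
        gcongr <;> apply abs_real_inner_le_half_add_sq
    _ ≤ 2 * s * modeSq a b f B := by
        have : 0 ≤ s * (‖a‖ ^ 2 + 2 * ‖b‖ ^ 2 + ‖B‖ ^ 2) := by positivity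
        rw [modeSq]; linarith

theorem eventually_nhdsGT_zero_mul_le {δ : ℝ} (hδ : 0 < δ) (K : ℝ) :
    ∀ᶠ s in 𝓝[>] (0 : ℝ), s * K ≤ δ := by
  have hlim : Tendsto (fun s : ℝ => s * K) (𝓝[>] 0) (𝓝 (0 * K)) :=
    (tendsto_id.mul_const K).mono_left nhdsWithin_le_nhds
  exact hlim.eventually_le_const (by simpa only [zero_mul] using hδ)

theorem exists_lyapunov_bounds (hmi : 0 < mi) (hme : 0 < me) (Ω : ℝ) :
    ∃ l M : ℝ, 0 < l ∧ 0 < M ∧ ∀ᶠ s in 𝓝[>] 0, ∀ ω ∈ Icc 0 Ω, ∀ a b f B : H,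
      l * modeSq a b f B ≤ lyapunov mi me ω s a b f B ∧
      lyapunov mi me ω s a b f B ≤ M * modeSq a b f B := by
  have hπ : 0 < (4 * π)⁻¹ := by positivity
  obtain ⟨D, hD, hDmi, hDme, hDπ⟩ : ∃ D > 0, D ≤ mi ∧ D ≤ me ∧ D ≤ (4 * π)⁻¹ :=
    ⟨min (min mi me) (4 * π)⁻¹, by positivity, by simp, by simp, by simp⟩
  refine ⟨D / 2, mi + me + (4 * π)⁻¹ + D / 2, by positivity, by positivity, ?_⟩
  filter_upwards [self_mem_nhdsWithin, eventually_nhdsGT_zero_mul_le one_pos 1,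
    eventually_nhdsGT_zero_mul_le one_pos Ω,
    eventually_nhdsGT_zero_mul_le (half_pos hD) 2] with s hs hs₁ hsΩ hsD ω hω a b f B
  have hsω : s * ω ≤ 1 := (mul_le_mul_of_nonneg_left hω.2 (le_of_lt hs)).trans hsΩ
  have herr := abs_le.1 <| abs_lyapunov_sub_energy_le (mi := mi) (me := me) (le_of_lt hs)
    (by simpa using hs₁) hω.1 hsω a b f B
  have hsmall : 2 * s * modeSq a b f B ≤ D / 2 * modeSq a b f B :=
    mul_le_mul_of_nonneg_right (by linarith) (modeSq_nonneg a b f B)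
  have hlower := mul_modeSq_le hDmi hDme hDπ hDπ a b f B
  have hupper : mi * ‖a‖ ^ 2 + me * ‖b‖ ^ 2 + (4 * π)⁻¹ * ‖f‖ ^ 2 + (4 * π)⁻¹ * ‖B‖ ^ 2
      ≤ (mi + me + (4 * π)⁻¹) * modeSq a b f B :=
    le_mul_modeSq (by linarith) (by linarith) (by linarith) (by linarith) a b f B
  constructor <;> linarith

theorem dissipation_eq (a b f B : H) :
    dissipation mi me νi νe e ω s a b f B
      = mi * νi * ‖a‖ ^ 2 + me * νe * ‖b‖ ^ 2 + e / mi * ‖s ^ 2 • f‖ ^ 2 + 1 * ‖(s ^ 3 * ω) • B‖ ^ 2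
        - s * dissipationError νi e ω s a b (s ^ 2 • f) ((s ^ 3 * ω) • B) := by
  simp only [dissipation, dissipationError, real_inner_smul_right, norm_smul, mul_pow,
    Real.norm_eq_abs, sq_abs]
  ring

theorem modeSq_rescale_le (hs : 0 ≤ s) (hs₁ : s ≤ 1) (hω : 0 ≤ ω) (hsω : s * ω ≤ 1)
    (a b f B : H) :
    s ^ 6 * ω ^ 2 * modeSq a b f B ≤ modeSq a b (s ^ 2 • f) ((s ^ 3 * ω) • B) := by
  have hsω_sq : (s * ω) ^ 2 ≤ 1 := pow_le_one₀ (by positivity) hsω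
  have hab : s ^ 6 * ω ^ 2 ≤ 1 := by
    calc s ^ 6 * ω ^ 2 = s ^ 4 * (s * ω) ^ 2 := by ring
      _ ≤ 1 := mul_le_one₀ (pow_le_one₀ hs hs₁) (sq_nonneg _) hsω_sq
  have hf : s ^ 6 * ω ^ 2 ≤ s ^ 4 := by
    calc s ^ 6 * ω ^ 2 = s ^ 4 * (s * ω) ^ 2 := by ring
      _ ≤ s ^ 4 := mul_le_of_le_one_right (by positivity) hsω_sq
  have hB : s ^ 6 * ω ^ 2 ≤ (s ^ 3 * ω) ^ 2 := by rw [mul_pow, ← pow_mul]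
  refine (mul_modeSq_le hab hab hf hB a b f B).trans_eq ?_
  simp only [modeSq, norm_smul, mul_pow, Real.norm_eq_abs, sq_abs]
  ring

theorem dissipationError_le (hνi : 0 ≤ νi) (he : 0 ≤ e) (hs : 0 ≤ s) (hs₁ : s ≤ 1)
    (hω : ω ∈ Icc 0 Ω) (hsω : s * ω ≤ 1) (a b F Y : H) :
    dissipationError νi e ω s a b F Y ≤ (νi + 16 * π * e + 1 + Ω) * modeSq a b F Y := by
  have hw : 0 ≤ 4 * π * e := by positivity
  have hN : ‖a‖ ^ 2 + ‖b‖ ^ 2 + ‖F‖ ^ 2 + ‖Y‖ ^ 2 = modeSq a b F Y := rfl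
  have hN₀ : 0 ≤ modeSq a b F Y := modeSq_nonneg a b F Y
  generalize modeSq a b F Y = N at hN hN₀ ⊢
  have ha := sq_nonneg ‖a‖
  have hb := sq_nonneg ‖b‖
  have hF := sq_nonneg ‖F‖
  have hY := sq_nonneg ‖Y‖
  have haF := abs_le.1 (abs_real_inner_le_half_add_sq a F)
  have haY := abs_le.1 (abs_real_inner_le_half_add_sq a Y)
  have hab := abs_le.1 (abs_real_inner_le_half_add_sq a b)
  have hbY := abs_le.1 (abs_real_inner_le_half_add_sq b Y)
  have h₁ : s * νi * ⟪a, F⟫ ≤ νi * N :=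
    mul_le_mul_of_nonneg (mul_le_of_le_one_left hνi hs₁) (by linarith) (by positivity) hN₀
  have h₃ : s ^ 3 * (4 * π * e) * ⟪a, a - b⟫ ≤ 4 * π * e * (2 * N) := by
    refine mul_le_mul_of_nonneg (mul_le_of_le_one_left hw (pow_le_one₀ hs hs₁)) ?_
      (by positivity) (by positivity)
    rw [inner_sub_right, real_inner_self_eq_norm_sq]
    linarith
  have h₄ : s ^ 2 * (4 * π * e) * ⟪a - b, Y⟫ ≤ 4 * π * e * (2 * N) := by
    refine mul_le_mul_of_nonneg (mul_le_of_le_one_left hw (pow_le_one₀ hs hs₁)) ?_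
      (by positivity) (by positivity)
    rw [inner_sub_left]
    linarith
  have h₅ : s * ω ^ 2 * ‖F‖ ^ 2 ≤ Ω * N := by
    refine mul_le_mul_of_nonneg ?_ (by linarith) (by positivity) hN₀
    calc s * ω ^ 2 = s * ω * ω := by ring
      _ ≤ ω := mul_le_of_le_one_left hω.1 hsω
      _ ≤ Ω := hω.2
  rw [dissipationError]
  linarith

theorem exists_mul_modeSq_le_dissipation (hmi : 0 < mi) (hme : 0 < me) (hνi : 0 < νi)
    (hνe : 0 < νe) (he : 0 < e) (Ω : ℝ) :
    ∃ d : ℝ, 0 < d ∧ ∀ᶠ s in 𝓝[>] 0, ∀ ω ∈ Icc 0 Ω, ∀ a b f B : H,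
      d * s ^ 6 * ω ^ 2 * modeSq a b f B ≤ dissipation mi me νi νe e ω s a b f B := by
  obtain ⟨D, hD, hDa, hDb, hDf, hDB⟩ :
      ∃ D > 0, D ≤ mi * νi ∧ D ≤ me * νe ∧ D ≤ e / mi ∧ D ≤ 1 :=
    ⟨min (min (mi * νi) (me * νe)) (min (e / mi) 1), by positivity, by simp, by simp, by simp,
      by simp⟩
  set K := νi + 16 * π * e + 1 + Ω
  refine ⟨D / 2, by positivity, ?_⟩
  filter_upwards [self_mem_nhdsWithin, eventually_nhdsGT_zero_mul_le one_pos 1,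
    eventually_nhdsGT_zero_mul_le one_pos Ω,
    eventually_nhdsGT_zero_mul_le (half_pos hD) K] with s hs hs₁ hsΩ hsK ω hω a b f B
  have hs₀ : 0 ≤ s := le_of_lt hs
  rw [mul_one] at hs₁
  have hsω : s * ω ≤ 1 := (mul_le_mul_of_nonneg_left hω.2 hs₀).trans hsΩ
  set N := modeSq a b (s ^ 2 • f) ((s ^ 3 * ω) • B)
  have hN : 0 ≤ N := modeSq_nonneg _ _ _ _
  have hscale : s ^ 6 * ω ^ 2 * modeSq a b f B ≤ N := modeSq_rescale_le hs₀ hs₁ hω.1 hsω a b f B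
  calc D / 2 * s ^ 6 * ω ^ 2 * modeSq a b f B
      = D / 2 * (s ^ 6 * ω ^ 2 * modeSq a b f B) := by ring
    _ ≤ D / 2 * N := by gcongr
    _ = D * N - D / 2 * N := by ring
    _ ≤ D * N - s * K * N := by gcongr
    _ = D * N - s * (K * N) := by ring
    _ ≤ _ := by
        rw [dissipation_eq]
        gcongr
        · exact mul_modeSq_le hDa hDb hDf hDB _ _ _ _
        · exact dissipationError_le hνi.le he.le hs₀ hs₁ hω hsω _ _ _ _

theorem IsTwoFluidMode.exists_modeSq_decay (H : Type*) [NormedAddCommGroup H]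
    [InnerProductSpace ℝ H] (hmi : 0 < mi) (hme : 0 < me) (hνi : 0 < νi) (hνe : 0 < νe)
    (he : 0 < e) (Ω : ℝ) :
    ∃ K θ : ℝ, 0 < K ∧ 0 < θ ∧ ∀ ω ∈ Icc 0 Ω, ∀ a b f B : ℝ → H,
      IsTwoFluidMode mi me νi νe e ω a b f B → ∀ t ∈ Ici 0,
        modeSq (a t) (b t) (f t) (B t)
          ≤ K * Real.exp (-(θ * ω ^ 2) * t) * modeSq (a 0) (b 0) (f 0) (B 0) := by
  obtain ⟨d, hd, hdiss⟩ :=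
    exists_mul_modeSq_le_dissipation (H := H) hmi hme hνi hνe he Ω
  obtain ⟨l, M, hl, hM, hlyap⟩ := exists_lyapunov_bounds (H := H) hmi hme Ω
  obtain ⟨s, ⟨hdiss, hlyap⟩, hs : 0 < s⟩ := ((hdiss.and hlyap).and self_mem_nhdsWithin).exists
  refine ⟨M / l, 2 * (d * s ^ 6) / M, by positivity, by positivity, ?_⟩
  intro ω hω a b f B hmode t ht
  set θ := 2 * (d * s ^ 6) / M with hθ
  set L : ℝ → ℝ := fun t => lyapunov mi me ω s (a t) (b t) (f t) (B t)
  set N : ℝ → ℝ := fun t => modeSq (a t) (b t) (f t) (B t)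
  have hL : L t ≤ Real.exp (-(θ * ω ^ 2) * t) * L 0 := by
    refine le_exp_mul_of_hasDerivWithinAt_le
      (fun x hx => hmode.hasDerivWithinAt_lyapunov hmi.ne' hme.ne' hx) (fun x _ => ?_) t ht
    have hdamp : θ * ω ^ 2 * L x ≤ 2 * dissipation mi me νi νe e ω s (a x) (b x) (f x) (B x) := by
      calc θ * ω ^ 2 * L x ≤ θ * ω ^ 2 * (M * N x) := by gcongr; exact (hlyap ω hω _ _ _ _).2
        _ = 2 * (d * s ^ 6 * ω ^ 2 * N x) := by rw [hθ]; field_simp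
        _ ≤ _ := by gcongr; exact hdiss ω hω _ _ _ _
    linarith
  calc N t ≤ L t / l := by
        rw [le_div_iff₀ hl, mul_comm]; exact (hlyap ω hω _ _ _ _).1
    _ ≤ Real.exp (-(θ * ω ^ 2) * t) * (M * N 0) / l := by
        gcongr
        exact hL.trans (by gcongr; exact (hlyap ω hω _ _ _ _).2)
    _ = M / l * Real.exp (-(θ * ω ^ 2) * t) * N 0 := by ring

theorem IsTwoFluidMode.exists_sqrt_modeSq_decay (H : Type*) [NormedAddCommGroup H]
    [InnerProductSpace ℝ H] (hmi : 0 < mi) (hme : 0 < me) (hνi : 0 < νi) (hνe : 0 < νe)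
    (he : 0 < e) (Ω : ℝ) :
    ∃ K θ : ℝ, 0 < K ∧ 0 < θ ∧ ∀ ω ∈ Icc 0 Ω, ∀ a b f B : ℝ → H,
      IsTwoFluidMode mi me νi νe e ω a b f B → ∀ t ∈ Ici 0,
        √(modeSq (a t) (b t) (f t) (B t))
          ≤ K * Real.exp (-(θ * ω ^ 2) * t) * √(modeSq (a 0) (b 0) (f 0) (B 0)) := by
  obtain ⟨K, θ, hK, hθ, hdecay⟩ := exists_modeSq_decay H hmi hme hνi hνe he Ω
  refine ⟨√K, θ / 2, by positivity, by positivity, fun ω hω a b f B hmode t ht => ?_⟩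
  have hexp : Real.exp (-(θ / 2 * ω ^ 2) * t) = √(Real.exp (-(θ * ω ^ 2) * t)) := by
    rw [← Real.exp_half]; ring_nf
  rw [hexp, ← Real.sqrt_mul hK.le, ← Real.sqrt_mul (by positivity)]
  exact Real.sqrt_le_sqrt (hdecay ω hω a b f B hmode t ht)

/-- The resistivity `η` of the plasma: the magnetic diffusion coefficient of the paper is
`μ₂ = c² η`. -/
noncomputable def resistivity (mi me νi νe e : ℝ) : ℝ :=
  mi * νi * me * νe / (4 * π * e ^ 2 * (mi * νi + me * νe))

theorem resistivity_pos (hmi : 0 < mi) (hme : 0 < me) (hνi : 0 < νi) (hνe : 0 < νe)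
    (he : 0 < e) : 0 < resistivity mi me νi νe e := by unfold resistivity; positivity

/-- The combination `X` of the fast fields for which `B + ω X` solves the diffusion equation
`w' = -η ω² w` up to a forcing of order `ω³`. -/
noncomputable def diffusionCorrector (mi me νi νe e : ℝ) (a b f : H) : H :=
  resistivity mi me νi νe e • ((4 * π * e / νi) • a - (4 * π * e / νe) • b - f)

theorem IsTwoFluidMode.hasDerivWithinAt_add_diffusionCorrector {a b f B : ℝ → H}
    (hmi : 0 < mi) (hme : 0 < me) (hνi : 0 < νi) (hνe : 0 < νe) (he : 0 < e)
    (h : IsTwoFluidMode mi me νi νe e ω a b f B) {t : ℝ} (ht : t ∈ Ici 0) :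
    HasDerivWithinAt (fun t => B t + ω • diffusionCorrector mi me νi νe e (a t) (b t) (f t))
      (-(resistivity mi me νi νe e * ω ^ 2) • B t) (Ici 0) t := by
  set η := resistivity mi me νi νe e with hη
  have ha := h.ion t ht
  have hb := h.electron t ht
  have hf := h.electric t ht
  have hohm : η * (4 * π * e / νi * (e / mi) + 4 * π * e / νe * (e / me)) = 1 := by
    rw [hη, resistivity]
    field_simp
    ring
  refine ((h.magnetic t ht).add (((((ha.const_smul (4 * π * e / νi)).sub
    (hb.const_smul (4 * π * e / νe))).sub hf).const_smul η).const_smul ω)).congr_deriv ?_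
  have hion : 4 * π * e / νi * νi = 4 * π * e := div_mul_cancel₀ _ hνi.ne'
  have helectron : 4 * π * e / νe * νe = 4 * π * e := div_mul_cancel₀ _ hνe.ne'
  linear_combination (norm := module)
    (ω * hohm) • f t - (ω * η * hion) • a t + (ω * η * helectron) • b t

theorem norm_diffusionCorrector_le (hmi : 0 < mi) (hme : 0 < me) (hνi : 0 < νi) (hνe : 0 < νe)
    (he : 0 < e) (a b f B : H) :
    ‖diffusionCorrector mi me νi νe e a b f‖
      ≤ resistivity mi me νi νe e * (4 * π * e / νi + 4 * π * e / νe + 1)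
        * √(modeSq a b f B) := by
  have hη := resistivity_pos hmi hme hνi hνe he
  obtain ⟨ha, hb, hf⟩ := norm_le_sqrt_modeSq a b f B
  set S := √(modeSq a b f B)
  calc ‖diffusionCorrector mi me νi νe e a b f‖
      ≤ resistivity mi me νi νe e * (4 * π * e / νi * ‖a‖ + 4 * π * e / νe * ‖b‖ + ‖f‖) := by
        rw [diffusionCorrector, norm_smul, Real.norm_of_nonneg hη.le]
        gcongr
        refine (norm_sub_le _ _).trans (add_le_add_left ((norm_sub_le _ _).trans_eq ?_) _)
        rw [norm_smul, norm_smul, Real.norm_of_nonneg (by positivity),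
          Real.norm_of_nonneg (by positivity)]
    _ ≤ resistivity mi me νi νe e * (4 * π * e / νi * S + 4 * π * e / νe * S + S) := by gcongr
    _ = _ := by ring

theorem IsTwoFluidMode.exists_norm_diffusionCorrector_decay (H : Type*) [NormedAddCommGroup H]
    [InnerProductSpace ℝ H] (hmi : 0 < mi) (hme : 0 < me) (hνi : 0 < νi) (hνe : 0 < νe)
    (he : 0 < e) (Ω : ℝ) :
    ∃ G lam : ℝ, 0 < G ∧ 0 < lam ∧ lam < resistivity mi me νi νe e ∧
      ∀ ω ∈ Icc 0 Ω, ∀ a b f B : ℝ → H, IsTwoFluidMode mi me νi νe e ω a b f B → ∀ t ∈ Ici 0,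
        ‖diffusionCorrector mi me νi νe e (a t) (b t) (f t)‖
          ≤ G * √(modeSq (a 0) (b 0) (f 0) (B 0)) * Real.exp (-(lam * ω ^ 2) * t) := by
  obtain ⟨K, θ, hK, hθ, hdecay⟩ := exists_sqrt_modeSq_decay H hmi hme hνi hνe he Ω
  have hη := resistivity_pos hmi hme hνi hνe he
  set A := resistivity mi me νi νe e * (4 * π * e / νi + 4 * π * e / νe + 1)
  refine ⟨A * K, min θ (resistivity mi me νi νe e / 2), by positivity, by positivity,
    (min_le_right _ _).trans_lt (half_lt_self hη), fun ω hω a b f B hmode t ht => ?_⟩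
  have ht₀ : 0 ≤ t := ht
  set U := √(modeSq (a 0) (b 0) (f 0) (B 0))
  calc ‖diffusionCorrector mi me νi νe e (a t) (b t) (f t)‖
      ≤ A * √(modeSq (a t) (b t) (f t) (B t)) :=
        norm_diffusionCorrector_le hmi hme hνi hνe he _ _ _ _
    _ ≤ A * (K * Real.exp (-(θ * ω ^ 2) * t) * U) := by
        gcongr; exact hdecay ω hω a b f B hmode t ht
    _ = A * K * U * Real.exp (-(θ * ω ^ 2) * t) := by ring
    _ ≤ _ := by gcongr; exact min_le_left _ _

theorem IsTwoFluidMode.norm_add_diffusionCorrector_sub_le {a b f B : ℝ → H} {lam M : ℝ}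
    (hmi : 0 < mi) (hme : 0 < me) (hνi : 0 < νi) (hνe : 0 < νe) (he : 0 < e) (hω : 0 < ω)
    (hlam : lam < resistivity mi me νi νe e) (h : IsTwoFluidMode mi me νi νe e ω a b f B)
    (hX : ∀ t ∈ Ici 0, ‖diffusionCorrector mi me νi νe e (a t) (b t) (f t)‖
      ≤ M * Real.exp (-(lam * ω ^ 2) * t)) :
    ∀ t ∈ Ici 0,
      ‖(B t + ω • diffusionCorrector mi me νi νe e (a t) (b t) (f t))
          - Real.exp (-(resistivity mi me νi νe e * ω ^ 2) * t)
            • (B 0 + ω • diffusionCorrector mi me νi νe e (a 0) (b 0) (f 0))‖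
        ≤ ω * (resistivity mi me νi νe e * M / (resistivity mi me νi νe e - lam))
          * Real.exp (-(lam * ω ^ 2) * t) := by
  intro t ht
  have hη := resistivity_pos hmi hme hνi hνe he
  set η := resistivity mi me νi νe e
  set X : ℝ → H := fun t => diffusionCorrector mi me νi νe e (a t) (b t) (f t)
  have hgap : η - lam ≠ 0 := (sub_pos.2 hlam).ne'
  refine (norm_sub_exp_smul_le_of_norm_forcing_le (κ := η * ω ^ 2) (lam := lam * ω ^ 2)
    (M := η * ω ^ 3 * M) (w := fun t => B t + ω • X t)
    (g := fun t => (η * ω ^ 3) • X t) (by gcongr)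
    (fun x hx => ?_) (fun x hx => ?_) t ht).trans_eq ?_
  · refine (h.hasDerivWithinAt_add_diffusionCorrector hmi hme hνi hνe he hx).congr_deriv ?_
    module
  · calc ‖(η * ω ^ 3) • X x‖ = η * ω ^ 3 * ‖X x‖ := by
          rw [norm_smul, Real.norm_of_nonneg (by positivity)]
      _ ≤ η * ω ^ 3 * (M * Real.exp (-(lam * ω ^ 2) * x)) := by gcongr; exact hX x hx
      _ = η * ω ^ 3 * M * Real.exp (-(lam * ω ^ 2) * x) := by ring
  · rw [← sub_mul]
    field_simp

theorem IsTwoFluidMode.exists_norm_sub_exp_smul_le (H : Type*) [NormedAddCommGroup H]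
    [InnerProductSpace ℝ H] (hmi : 0 < mi) (hme : 0 < me) (hνi : 0 < νi) (hνe : 0 < νe)
    (he : 0 < e) (Ω : ℝ) :
    ∃ C lam : ℝ, 0 < C ∧ 0 < lam ∧ ∀ ω ∈ Ioc 0 Ω, ∀ a b f B : ℝ → H,
      IsTwoFluidMode mi me νi νe e ω a b f B → ∀ t ∈ Ici 0,
        ‖B t - Real.exp (-(resistivity mi me νi νe e * ω ^ 2) * t) • B 0‖
          ≤ C * (ω * Real.exp (-(lam * ω ^ 2) * t)) * √(modeSq (a 0) (b 0) (f 0) (B 0)) := by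
  obtain ⟨G, lam, hG, hlam, hlt, hdecay⟩ :=
    exists_norm_diffusionCorrector_decay H hmi hme hνi hνe he Ω
  have hη : 0 < resistivity mi me νi νe e := resistivity_pos hmi hme hνi hνe he
  have hgap := sub_pos.2 hlt
  refine ⟨resistivity mi me νi νe e * G / (resistivity mi me νi νe e - lam) + G + G, lam,
    by positivity, hlam, fun ω hω a b f B hmode t ht => ?_⟩
  have hω₀ : 0 < ω := hω.1
  have ht₀ : 0 ≤ t := ht
  have hX := hdecay ω (Ioc_subset_Icc_self hω) a b f B hmode
  have hW := hmode.norm_add_diffusionCorrector_sub_le hmi hme hνi hνe he hω₀ hlt hX t ht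
  set η := resistivity mi me νi νe e
  set U := √(modeSq (a 0) (b 0) (f 0) (B 0))
  set X : ℝ → H := fun t => diffusionCorrector mi me νi νe e (a t) (b t) (f t)
  set W : ℝ → H := fun t => B t + ω • X t
  have hX₀ : ‖X 0‖ ≤ G * U := by simpa using hX 0 self_mem_Ici
  calc ‖B t - Real.exp (-(η * ω ^ 2) * t) • B 0‖
      = ‖W t - Real.exp (-(η * ω ^ 2) * t) • W 0 - ω • X t
          + (ω * Real.exp (-(η * ω ^ 2) * t)) • X 0‖ := by
        simp only [W]; congr 1; module
    _ ≤ ‖W t - Real.exp (-(η * ω ^ 2) * t) • W 0‖ + ω * ‖X t‖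
          + ω * Real.exp (-(η * ω ^ 2) * t) * ‖X 0‖ := by
        refine (norm_add_le _ _).trans (add_le_add ((norm_sub_le _ _).trans_eq ?_) (le_of_eq ?_))
        · rw [norm_smul, Real.norm_of_nonneg hω₀.le]
        · rw [norm_smul, Real.norm_of_nonneg (by positivity)]
    _ ≤ ω * (η * (G * U) / (η - lam)) * Real.exp (-(lam * ω ^ 2) * t)
          + ω * (G * U * Real.exp (-(lam * ω ^ 2) * t))
          + ω * Real.exp (-(lam * ω ^ 2) * t) * (G * U) := by
        gcongr
        exact hX t ht
    _ = _ := by ring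

end Mode

section Curl

theorem hsq_eq_norm_toLp_sq (v : Fin 3 → ℂ) : hsq v = ‖WithLp.toLp 2 v‖ ^ 2 := by
  simp only [hsq, EuclideanSpace.norm_sq_eq, normSq_eq_norm_sq]

theorem hnorm_eq_norm_toLp (v : Fin 3 → ℂ) : hnorm v = ‖WithLp.toLp 2 v‖ := by
  rw [hnorm, hsq_eq_norm_toLp_sq, Real.sqrt_sq (norm_nonneg _)]

theorem cross3_eq_crossProduct (u v : Fin 3 → ℂ) : cross3 u v = u ⨯₃ v := (cross_apply u v).symm

theorem hsq_cross3_add_normSq_dotProduct_star (u v : Fin 3 → ℂ) :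
    hsq (cross3 u v) + normSq (u ⬝ᵥ star v) = hsq u * hsq v := by
  simp only [hsq, cross3, Fin.isValue, normSq_apply, Fin.sum_univ_three, Matrix.cons_val_zero,
    sub_re, mul_re, sub_im, mul_im, Matrix.cons_val_one, Matrix.cons_val, dotProduct,
    Pi.star_apply, RCLike.star_def, add_re, conj_re, conj_im, mul_neg, sub_neg_eq_add, add_im]
  ring

theorem hsq_cross3_le (u v : Fin 3 → ℂ) : hsq (cross3 u v) ≤ hsq u * hsq v := by
  linarith [hsq_cross3_add_normSq_dotProduct_star u v, normSq_nonneg (u ⬝ᵥ star v)]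

/-- The modulus `|k|` of a wave vector. -/
noncomputable def waveNumber (k : Fin 3 → ℝ) : ℝ := √(∑ j, k j ^ 2)

theorem waveNumber_sq (k : Fin 3 → ℝ) : waveNumber k ^ 2 = ∑ j, k j ^ 2 :=
  Real.sq_sqrt (by positivity)

theorem waveNumber_pos {k : Fin 3 → ℝ} (hk : k ≠ 0) : 0 < waveNumber k := by
  obtain ⟨j, hj⟩ := Function.ne_iff.1 hk
  exact Real.sqrt_pos.2 (Finset.sum_pos' (fun _ _ => sq_nonneg _)
    ⟨j, Finset.mem_univ j, sq_pos_of_ne_zero hj⟩)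

theorem hsq_ikv (k : Fin 3 → ℝ) : hsq (ikv k) = waveNumber k ^ 2 := by
  rw [waveNumber_sq]
  exact Finset.sum_congr rfl fun j _ => by simp [ikv, sq]

theorem cross3_ikv_cross3_ikv {k : Fin 3 → ℝ} {v : Fin 3 → ℂ}
    (hv : ∑ j, (k j : ℂ) * v j = 0) :
    cross3 (ikv k) (cross3 (ikv k) v) = waveNumber k ^ 2 • v := by
  have hdot : ikv k ⬝ᵥ v = 0 := by
    simp only [dotProduct, ikv, mul_assoc, ← Finset.mul_sum, hv, mul_zero]
  have hself : ikv k ⬝ᵥ ikv k = -((waveNumber k ^ 2 : ℝ) : ℂ) := by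
    rw [waveNumber_sq, ofReal_sum, ← Finset.sum_neg_distrib]
    refine Finset.sum_congr rfl fun j _ => ?_
    rw [ikv, ofReal_pow]
    linear_combination (k j : ℂ) ^ 2 * I_sq
  rw [cross3_eq_crossProduct, cross3_eq_crossProduct, cross_cross_eq_smul_sub_smul', hdot,
    hself, zero_smul, zero_sub, neg_smul, neg_neg, coe_smul]

/-- The map `u ↦ |k|⁻¹ (i k) × u`, which on transverse fields is an isometric involution. -/
noncomputable def unitCurl (k : Fin 3 → ℝ) : (Fin 3 → ℂ) →L[ℝ] EuclideanSpace ℂ (Fin 3) :=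
  (waveNumber k)⁻¹ • LinearMap.toContinuousLinearMap
    (((WithLp.linearEquiv 2 ℂ (Fin 3 → ℂ)).symm.toLinearMap ∘ₗ
      crossProduct (ikv k)).restrictScalars ℝ)

theorem unitCurl_apply (k : Fin 3 → ℝ) (u : Fin 3 → ℂ) :
    unitCurl k u = (waveNumber k)⁻¹ • WithLp.toLp 2 (cross3 (ikv k) u) := by
  rw [cross3_eq_crossProduct]
  rfl

theorem norm_unitCurl_sq_le {k : Fin 3 → ℝ} (hk : k ≠ 0) (u : Fin 3 → ℂ) :
    ‖unitCurl k u‖ ^ 2 ≤ hsq u := by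
  have hr := waveNumber_pos hk
  rw [unitCurl_apply, norm_smul, mul_pow, ← hsq_eq_norm_toLp_sq, norm_inv,
    Real.norm_of_nonneg hr.le, inv_pow, inv_mul_le_iff₀ (by positivity), ← hsq_ikv]
  exact hsq_cross3_le _ _

theorem toLp_cross3_ikv {k : Fin 3 → ℝ} (hk : k ≠ 0) (u : Fin 3 → ℂ) :
    WithLp.toLp 2 (cross3 (ikv k) u) = waveNumber k • unitCurl k u := by
  rw [unitCurl_apply, smul_inv_smul₀ (waveNumber_pos hk).ne']

theorem unitCurl_cross3_ikv {k : Fin 3 → ℝ} (hk : k ≠ 0) {v : Fin 3 → ℂ}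
    (hv : ∑ j, (k j : ℂ) * v j = 0) :
    unitCurl k (cross3 (ikv k) v) = waveNumber k • WithLp.toLp 2 v := by
  have hr := (waveNumber_pos hk).ne'
  rw [unitCurl_apply, cross3_ikv_cross3_ikv hv, WithLp.toLp_smul, smul_smul]
  congr 1
  field_simp

theorem modeSq_unitCurl_le (hk : k ≠ 0) (u v f B : Fin 3 → ℂ) :
    modeSq (unitCurl k u) (unitCurl k v) (unitCurl k f) (WithLp.toLp 2 B)
      ≤ hsq u + hsq v + hsq f + hsq B := by
  rw [modeSq, hsq_eq_norm_toLp_sq B]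
  gcongr <;> exact norm_unitCurl_sq_le hk _

end Curl

/-- The transverse two-fluid Maxwell system at wave vector `k`, on the half-line `[0, ∞)` and
solved for the time derivatives. Of the transversality constraints only Gauss's law for `B` is
recorded. -/
structure IsTwoFluidMaxwell (mi me νi νe e c : ℝ) (k : Fin 3 → ℝ)
    (ui ue E B : ℝ → Fin 3 → ℂ) : Prop where
  ion : ∀ t ∈ Ici 0, HasDerivWithinAt ui ((e / mi) • E t - νi • ui t) (Ici 0) t
  electron : ∀ t ∈ Ici 0, HasDerivWithinAt ue (-(e / me) • E t - νe • ue t) (Ici 0) t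
  electric : ∀ t ∈ Ici 0,
    HasDerivWithinAt E (c • cross3 (ikv k) (B t) - (4 * π * e) • (ui t - ue t)) (Ici 0) t
  magnetic : ∀ t ∈ Ici 0, HasDerivWithinAt B (-c • cross3 (ikv k) (E t)) (Ici 0) t
  gauss : ∀ t ∈ Ici 0, ∑ j, (k j : ℂ) * B t j = 0

namespace IsTwoFluidMaxwell

variable {mi me νi νe e c : ℝ} {k : Fin 3 → ℝ} {ui ue E B : ℝ → Fin 3 → ℂ}

theorem isTwoFluidMode (hk : k ≠ 0) (h : IsTwoFluidMaxwell mi me νi νe e c k ui ue E B) :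
    IsTwoFluidMode mi me νi νe e (c * waveNumber k) (fun t => unitCurl k (ui t))
      (fun t => unitCurl k (ue t)) (fun t => unitCurl k (E t))
      (fun t => WithLp.toLp 2 (B t)) where
  ion t ht := ((unitCurl k).hasFDerivAt.comp_hasDerivWithinAt t (h.ion t ht)).congr_deriv
    (by simp only [map_sub, map_smul])
  electron t ht :=
    ((unitCurl k).hasFDerivAt.comp_hasDerivWithinAt t (h.electron t ht)).congr_deriv
      (by simp only [map_sub, map_smul])
  electric t ht :=
    ((unitCurl k).hasFDerivAt.comp_hasDerivWithinAt t (h.electric t ht)).congr_deriv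
      (by simp only [map_sub, map_smul, unitCurl_cross3_ikv hk (h.gauss t ht), smul_smul])
  magnetic t ht :=
    ((PiLp.continuousLinearEquiv 2 ℝ fun _ : Fin 3 => ℂ).symm.hasFDerivAt.comp_hasDerivWithinAt
      t (h.magnetic t ht)).congr_deriv (by
        rw [map_smul]
        change -c • WithLp.toLp 2 (cross3 (ikv k) (E t)) = _
        rw [toLp_cross3_ikv hk, smul_smul, neg_mul])

theorem of_deriv (hmi : mi ≠ 0) (hme : me ≠ 0) (hui : Differentiable ℝ ui)
    (hue : Differentiable ℝ ue) (hE : Differentiable ℝ E) (hB : Differentiable ℝ B)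
    (gauss : ∀ t, ∑ j, (k j : ℂ) * B t j = 0)
    (ion : ∀ t j, (mi : ℂ) * deriv ui t j - (e : ℂ) * E t j
      + (mi : ℂ) * (νi : ℂ) * ui t j = 0)
    (electron : ∀ t j, (me : ℂ) * deriv ue t j + (e : ℂ) * E t j
      + (me : ℂ) * (νe : ℂ) * ue t j = 0)
    (electric : ∀ t j, deriv E t j - (c : ℂ) * cross3 (ikv k) (B t) j
      + 4 * (π : ℂ) * (e : ℂ) * (ui t j - ue t j) = 0)
    (magnetic : ∀ t j, deriv B t j + (c : ℂ) * cross3 (ikv k) (E t) j = 0) :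
    IsTwoFluidMaxwell mi me νi νe e c k ui ue E B where
  ion t _ := (hui t).hasDerivAt.hasDerivWithinAt.congr_deriv <| by
    have hmi' : (mi : ℂ) ≠ 0 := ofReal_ne_zero.2 hmi
    ext j
    simp only [Pi.sub_apply, Pi.smul_apply, real_smul, ofReal_div]
    field_simp
    linear_combination ion t j
  electron t _ := (hue t).hasDerivAt.hasDerivWithinAt.congr_deriv <| by
    have hme' : (me : ℂ) ≠ 0 := ofReal_ne_zero.2 hme
    ext j
    simp only [Pi.sub_apply, Pi.smul_apply, real_smul, ofReal_div, ofReal_neg]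
    field_simp
    linear_combination electron t j
  electric t _ := (hE t).hasDerivAt.hasDerivWithinAt.congr_deriv <| by
    ext j
    simp only [Pi.sub_apply, Pi.smul_apply, real_smul, ofReal_mul, ofReal_ofNat]
    linear_combination electric t j
  magnetic t _ := (hB t).hasDerivAt.hasDerivWithinAt.congr_deriv <| by
    ext j
    simp only [Pi.smul_apply, real_smul, ofReal_neg]
    linear_combination magnetic t j
  gauss t _ := gauss t

end IsTwoFluidMaxwell

theorem stmt_18_general (mi me νi νe e c r₀ : ℝ) (hmi : 0 < mi) (hme : 0 < me) (hνi : 0 < νi)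
    (hνe : 0 < νe) (he : 0 < e) (hc : 0 < c) :
    ∃ C lam : ℝ, 0 < C ∧ 0 < lam ∧ ∀ k : Fin 3 → ℝ, k ≠ 0 → waveNumber k ≤ r₀ →
      ∀ ui ue E B : ℝ → Fin 3 → ℂ, IsTwoFluidMaxwell mi me νi νe e c k ui ue E B →
        ∀ t ∈ Ici 0,
          hnorm (B t - Real.exp (-(c ^ 2 * resistivity mi me νi νe e * waveNumber k ^ 2 * t))
              • B 0)
            ≤ C * (waveNumber k * Real.exp (-(lam * waveNumber k ^ 2 * t)))
              * √(hsq (ui 0) + hsq (ue 0) + hsq (E 0) + hsq (B 0)) := by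
  obtain ⟨C, lam, hC, hlam, hmode⟩ := IsTwoFluidMode.exists_norm_sub_exp_smul_le
    (EuclideanSpace ℂ (Fin 3)) hmi hme hνi hνe he (c * r₀)
  refine ⟨C * c, lam * c ^ 2, by positivity, by positivity, ?_⟩
  intro k hk hkr ui ue E B h t ht
  have hr := waveNumber_pos hk
  have hω : c * waveNumber k ∈ Ioc 0 (c * r₀) := ⟨by positivity, by gcongr⟩
  have hB := hmode _ hω _ _ _ _ (h.isTwoFluidMode hk) t ht
  rw [hnorm_eq_norm_toLp, WithLp.toLp_sub, WithLp.toLp_smul]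
  calc _ = _ := by ring_nf
    _ ≤ _ := hB
    _ ≤ C * (c * waveNumber k * Real.exp (-(lam * (c * waveNumber k) ^ 2) * t))
          * √(hsq (ui 0) + hsq (ue 0) + hsq (E 0) + hsq (B 0)) := by
        gcongr
        exact modeSq_unitCurl_le hk _ _ _ _
    _ = _ := by ring_nf

/-- Low-frequency error estimate between the magnetic field of the Fourier-transformed
transverse electromagnetic system and the magnetic diffusion wave, assuming the
zero-frequency cubic has three distinct roots. -/
theorem stmt_18 (mi me νi νe e c : ℝ)
    (hmi : 0 < mi) (hme : 0 < me) (hνi : 0 < νi) (hνe : 0 < νe)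
    (he : 0 < e) (hc : 0 < c)
    (hdisc : ∃ σ₂ σ₃ σ₄ : ℂ, σ₂ ≠ σ₃ ∧ σ₂ ≠ σ₄ ∧ σ₃ ≠ σ₄ ∧ ∀ z : ℂ,
      z ^ 3 + ((νi + νe : ℝ) : ℂ) * z ^ 2
        + ((νi * νe + 4 * π * (e ^ 2 / mi + e ^ 2 / me) : ℝ) : ℂ) * z
        + ((4 * π * (e ^ 2 * νe / mi + e ^ 2 * νi / me) : ℝ) : ℂ)
        = (z - σ₂) * (z - σ₃) * (z - σ₄)) :
    ∃ r₀ C lam : ℝ, 0 < r₀ ∧ 0 < C ∧ 0 < lam ∧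
      ∀ (k : Fin 3 → ℝ), k ≠ 0 → Real.sqrt (∑ j, (k j) ^ 2) ≤ r₀ →
      ∀ (ui ue E B : ℝ → Fin 3 → ℂ),
        Differentiable ℝ ui → Differentiable ℝ ue →
        Differentiable ℝ E → Differentiable ℝ B →
        (∀ t : ℝ, ∑ j, (k j : ℂ) * ui t j = 0) →
        (∀ t : ℝ, ∑ j, (k j : ℂ) * ue t j = 0) →
        (∀ t : ℝ, ∑ j, (k j : ℂ) * E t j = 0) →
        (∀ t : ℝ, ∑ j, (k j : ℂ) * B t j = 0) →
        (∀ (t : ℝ) (j : Fin 3), (mi : ℂ) * deriv ui t j - (e : ℂ) * E t j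
          + (mi : ℂ) * (νi : ℂ) * ui t j = 0) →
        (∀ (t : ℝ) (j : Fin 3), (me : ℂ) * deriv ue t j + (e : ℂ) * E t j
          + (me : ℂ) * (νe : ℂ) * ue t j = 0) →
        (∀ (t : ℝ) (j : Fin 3), deriv E t j - (c : ℂ) * cross3 (ikv k) (B t) j
          + 4 * (π : ℂ) * (e : ℂ) * (ui t j - ue t j) = 0) →
        (∀ (t : ℝ) (j : Fin 3), deriv B t j + (c : ℂ) * cross3 (ikv k) (E t) j = 0) →
        (let ksq : ℝ := ∑ j, (k j) ^ 2
         let μ₂ : ℝ := c ^ 2 * mi * νi * me * νe / (4 * π * e ^ 2 * (mi * νi + me * νe))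
         let U0 : ℝ := Real.sqrt (hsq (ui 0) + hsq (ue 0) + hsq (E 0) + hsq (B 0))
         ∀ t : ℝ, 0 ≤ t →
           hnorm (fun j => B t j - Complex.exp (-((μ₂ * ksq * t : ℝ) : ℂ)) * B 0 j) ≤
             C * (Real.sqrt ksq * Real.exp (-(lam * ksq * t)) + Real.exp (-(lam * t))) * U0) := by
  obtain ⟨C, lam, hC, hlam, hdecay⟩ := stmt_18_general mi me νi νe e c 1 hmi hme hνi hνe he hc
  refine ⟨1, C, lam, one_pos, hC, hlam, ?_⟩
  intro k hk hkr ui ue E B hui hue hE hB _ _ _ gauss ion electron electric magnetic ksq μ₂ U0 t ht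
  have hbound := hdecay k hk hkr ui ue E B
    (.of_deriv hmi.ne' hme.ne' hui hue hE hB gauss ion electron electric magnetic) t ht
  have hμ₂ : c ^ 2 * resistivity mi me νi νe e = μ₂ := by
    simp only [resistivity, μ₂, ← mul_div_assoc, ← mul_assoc]
  rw [hμ₂, waveNumber_sq] at hbound
  calc hnorm (fun j => B t j - cexp (-((μ₂ * ksq * t : ℝ) : ℂ)) * B 0 j)
      = hnorm (B t - Real.exp (-(μ₂ * ksq * t)) • B 0) := by
        simp only [← ofReal_neg, ← ofReal_exp, ← real_smul]
        rfl
    _ ≤ C * (√ksq * Real.exp (-(lam * ksq * t))) * U0 := hbound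
    _ ≤ C * (√ksq * Real.exp (-(lam * ksq * t)) + Real.exp (-(lam * t))) * U0 := by
        gcongr
        exact le_add_of_nonneg_right (Real.exp_pos _).le
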